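/- For every (q₁,q₂) ∈ ℂ² with (q₁,q₂) ≠ (0,0), writing s = |q₁|² + |q₂|², the binary cubic F_{(conj(q₁)/s, q₂/s)} is degenerate if and only if F_{(q₁,q₂)} is degenerate, and likewise F_{(q₁/s, conj(q₂)/s)} is degenerate if and only if F_{(q₁,q₂)} is degenerate. In other words, the discriminant locus of the Fermat cubic is invariant under these two inversive conformal transformations of ℝ⁴ ∪ {∞}. -/

import Mathlib

open Complex MvPolynomial

/-- The restriction of the Fermat cubic to the twistor fibre over `q = q₁ + q₂·j`,
as a homogeneous binary cubic in `ℂ[λ₁, λ₂]`. -/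
noncomputable def fermatFibrePoly (q₁ q₂ : ℂ) : MvPolynomial (Fin 2) ℂ :=
  (C q₁ * X 0 - C ((starRingEnd ℂ) q₂) * X 1) ^ 3
    + (C q₂ * X 0 + C ((starRingEnd ℂ) q₁) * X 1) ^ 3 + X 0 ^ 3 + X 1 ^ 3

/-- A binary form is degenerate if it is zero or has a projective root of multiplicity at
least two, i.e. it is not squarefree in `ℂ[λ₁,λ₂]`. -/
noncomputable def FermatDegenerate (q₁ q₂ : ℂ) : Prop := ¬ Squarefree (fermatFibrePoly q₁ q₂)

/-!
Over `q` the fibre consists of the points `(Q λ, λ)`, where `Q` is the `2 × 2` complex matrix of the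
quaternion `q`; so `F_q` is the Fermat form pulled back to the graph of `Q`. The Fermat form is
invariant under exchanging the two halves of the coordinates, which turns the graph of `Q` into that
of `Q⁻¹`, the matrix of `(conj q₁ / s, -q₂ / s)`. Two further symmetries correct the sign: permuting
the two coordinates of each half conjugates `Q` by a transposition, which gives the matrix of
`(conj q₁, -conj q₂)`, and complex conjugation of the coefficients conjugates the entries of `Q`.
-/

theorem squarefree_map_iff {F M N : Type*} [Monoid M] [Monoid N] [EquivLike F M N]
    [MulEquivClass F M N] (e : F) {x : M} : Squarefree (e x) ↔ Squarefree x := by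
  simp only [Squarefree, (EquivLike.surjective e).forall, ← map_mul, map_dvd_iff,
    isUnit_map_iff]

section FermatGraphForm

variable {k l m n R S : Type*} [Fintype m] [Fintype n] [CommSemiring R] [CommSemiring S]

theorem bind₁_toMvPolynomial_comp (A : Matrix m n R) (B : Matrix l m R) :
    (bind₁ A.toMvPolynomial).comp (bind₁ B.toMvPolynomial) = bind₁ (B * A).toMvPolynomial :=
  algHom_ext fun i ↦ by simp [Matrix.toMvPolynomial_mul]

/-- The invertible linear change of variables `X i ↦ ∑ j, A i j * X j`, the invertibility of `A`
being witnessed by a one-sided inverse `B`. -/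
noncomputable def linearSubstEquiv [DecidableEq n] (A B : Matrix n n R) (hAB : A * B = 1) :
    MvPolynomial n R ≃ₐ[R] MvPolynomial n R :=
  AlgEquiv.ofAlgHom (bind₁ A.toMvPolynomial) (bind₁ B.toMvPolynomial)
    (by simp [bind₁_toMvPolynomial_comp, mul_eq_one_comm.mp hAB])
    (by simp [bind₁_toMvPolynomial_comp, hAB])

theorem rename_toMvPolynomial_submatrix (f : k → l) (e : m ≃ n) (A : Matrix l n R) (i : k) :
    rename e ((A.submatrix f e).toMvPolynomial i) = A.toMvPolynomial (f i) := by
  simp [Matrix.toMvPolynomial, rename_monomial, Finsupp.mapDomain_single,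
    ← e.sum_comp (fun j ↦ monomial (Finsupp.single j 1) (A (f i) j))]

/-- The restriction of the Fermat form `∑ i, z i ^ d + ∑ i, w i ^ d` of degree `d` to the graph
`z = A w`, as a form in the variables `w`. -/
noncomputable def fermatGraphForm (d : ℕ) (A : Matrix n n R) : MvPolynomial n R :=
  ∑ i, A.toMvPolynomial i ^ d + ∑ i, X i ^ d

theorem map_fermatGraphForm (d : ℕ) (f : R →+* S) (A : Matrix n n R) :
    map f (fermatGraphForm d A) = fermatGraphForm d (A.map f) := by
  simp [fermatGraphForm, Matrix.toMvPolynomial_map]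

theorem rename_fermatGraphForm_submatrix (d : ℕ) (e : m ≃ n) (A : Matrix n n R) :
    rename e (fermatGraphForm d (A.submatrix e e)) = fermatGraphForm d A := by
  simp [fermatGraphForm, rename_toMvPolynomial_submatrix,
    e.sum_comp (fun i ↦ A.toMvPolynomial i ^ d), e.sum_comp (fun i ↦ X i ^ d)]

theorem bind₁_fermatGraphForm_of_mul_eq_one [DecidableEq n] (d : ℕ) {A B : Matrix n n R}
    (hAB : A * B = 1) :
    bind₁ B.toMvPolynomial (fermatGraphForm d A) = fermatGraphForm d B := by
  simp [fermatGraphForm, ← Matrix.toMvPolynomial_mul, hAB, add_comm]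

theorem squarefree_fermatGraphForm_map_iff (d : ℕ) (f : R ≃+* S) (A : Matrix n n R) :
    Squarefree (fermatGraphForm d (A.map f)) ↔ Squarefree (fermatGraphForm d A) := by
  rw [← squarefree_map_iff (mapEquiv n f), mapEquiv_apply, map_fermatGraphForm,
    RingEquiv.coe_toRingHom]

theorem squarefree_fermatGraphForm_submatrix_iff (d : ℕ) (e : m ≃ n) (A : Matrix n n R) :
    Squarefree (fermatGraphForm d (A.submatrix e e)) ↔ Squarefree (fermatGraphForm d A) := by
  rw [← squarefree_map_iff (renameEquiv R e), renameEquiv_apply, rename_fermatGraphForm_submatrix]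

theorem squarefree_fermatGraphForm_iff_of_mul_eq_one [DecidableEq n] (d : ℕ) {A B : Matrix n n R}
    (hAB : A * B = 1) :
    Squarefree (fermatGraphForm d A) ↔ Squarefree (fermatGraphForm d B) := by
  rw [← bind₁_fermatGraphForm_of_mul_eq_one d hAB]
  exact (squarefree_map_iff (linearSubstEquiv B A (mul_eq_one_comm.mp hAB))).symm

end FermatGraphForm

/-- The complex matrix of the quaternion `q₁ + q₂ j`: the first two coordinates of the point of the
twistor fibre with parameter `λ` are `quaternionMatrix q₁ q₂ *ᵥ λ`. -/
def quaternionMatrix (q₁ q₂ : ℂ) : Matrix (Fin 2) (Fin 2) ℂ :=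
  !![q₁, -(starRingEnd ℂ) q₂; q₂, (starRingEnd ℂ) q₁]

theorem quaternionMatrix_map_conj (q₁ q₂ : ℂ) :
    (quaternionMatrix q₁ q₂).map (starRingAut (R := ℂ)) =
      quaternionMatrix ((starRingEnd ℂ) q₁) ((starRingEnd ℂ) q₂) := by
  ext i j
  fin_cases i <;> fin_cases j <;> simp [quaternionMatrix]

theorem quaternionMatrix_submatrix_swap (q₁ q₂ : ℂ) :
    (quaternionMatrix q₁ q₂).submatrix (Equiv.swap 0 1) (Equiv.swap 0 1) =
      quaternionMatrix ((starRingEnd ℂ) q₁) (-(starRingEnd ℂ) q₂) := by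
  ext i j
  fin_cases i <;> fin_cases j <;> simp [quaternionMatrix]

theorem quaternionMatrix_mul (p₁ p₂ q₁ q₂ : ℂ) :
    quaternionMatrix p₁ p₂ * quaternionMatrix q₁ q₂ =
      quaternionMatrix (p₁ * q₁ - (starRingEnd ℂ) p₂ * q₂)
        (p₂ * q₁ + (starRingEnd ℂ) p₁ * q₂) := by
  ext i j
  fin_cases i <;> fin_cases j <;>
    simp [quaternionMatrix, Matrix.mul_apply, sub_eq_add_neg, add_comm]

theorem quaternionMatrix_one_zero : quaternionMatrix 1 0 = 1 := by
  simp [quaternionMatrix, Matrix.one_fin_two]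

theorem normSq_add_normSq_ne_zero {q₁ q₂ : ℂ} (h : (q₁, q₂) ≠ (0, 0)) :
    normSq q₁ + normSq q₂ ≠ 0 := by
  rw [ne_eq, add_eq_zero_iff_of_nonneg (normSq_nonneg q₁) (normSq_nonneg q₂)]
  simpa using h

theorem quaternionMatrix_inv_mul {q₁ q₂ : ℂ} (h : (q₁, q₂) ≠ (0, 0)) :
    quaternionMatrix ((starRingEnd ℂ) q₁ / ((normSq q₁ + normSq q₂ : ℝ) : ℂ))
        (-(q₂ / ((normSq q₁ + normSq q₂ : ℝ) : ℂ))) * quaternionMatrix q₁ q₂ = 1 := by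
  have hs : ((normSq q₁ + normSq q₂ : ℝ) : ℂ) ≠ 0 :=
    ofReal_ne_zero.mpr (normSq_add_normSq_ne_zero h)
  have hnorm : (starRingEnd ℂ) q₁ * q₁ + (starRingEnd ℂ) q₂ * q₂ =
      ((normSq q₁ + normSq q₂ : ℝ) : ℂ) := by
    simp [normSq_eq_conj_mul_self]
  rw [quaternionMatrix_mul, ← quaternionMatrix_one_zero]
  congr 1
  · simp only [map_neg, map_div₀, conj_ofReal]
    field_simp
    linear_combination hnorm
  · simp only [map_div₀, conj_ofReal, conj_conj]
    ring

theorem fermatFibrePoly_eq_fermatGraphForm (q₁ q₂ : ℂ) :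
    fermatFibrePoly q₁ q₂ = fermatGraphForm 3 (quaternionMatrix q₁ q₂) := by
  simp [fermatFibrePoly, fermatGraphForm, quaternionMatrix, Matrix.toMvPolynomial,
    ← C_mul_X_eq_monomial, sub_eq_add_neg, add_assoc]

theorem fermatDegenerate_conj_iff (q₁ q₂ : ℂ) :
    FermatDegenerate ((starRingEnd ℂ) q₁) ((starRingEnd ℂ) q₂) ↔ FermatDegenerate q₁ q₂ := by
  simp only [FermatDegenerate, fermatFibrePoly_eq_fermatGraphForm, ← quaternionMatrix_map_conj,
    squarefree_fermatGraphForm_map_iff]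

theorem fermatDegenerate_conj_neg_conj_iff (q₁ q₂ : ℂ) :
    FermatDegenerate ((starRingEnd ℂ) q₁) (-(starRingEnd ℂ) q₂) ↔ FermatDegenerate q₁ q₂ := by
  simp only [FermatDegenerate, fermatFibrePoly_eq_fermatGraphForm,
    ← quaternionMatrix_submatrix_swap, squarefree_fermatGraphForm_submatrix_iff]

theorem fermatDegenerate_neg_right_iff (q₁ q₂ : ℂ) :
    FermatDegenerate q₁ (-q₂) ↔ FermatDegenerate q₁ q₂ := by
  rw [← fermatDegenerate_conj_neg_conj_iff, ← fermatDegenerate_conj_iff q₁ q₂, map_neg, neg_neg]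

theorem fermatDegenerate_quaternion_inv_iff {q₁ q₂ : ℂ} (h : (q₁, q₂) ≠ (0, 0)) :
    FermatDegenerate ((starRingEnd ℂ) q₁ / ((normSq q₁ + normSq q₂ : ℝ) : ℂ))
        (-(q₂ / ((normSq q₁ + normSq q₂ : ℝ) : ℂ))) ↔ FermatDegenerate q₁ q₂ := by
  simp only [FermatDegenerate, fermatFibrePoly_eq_fermatGraphForm,
    squarefree_fermatGraphForm_iff_of_mul_eq_one 3 (quaternionMatrix_inv_mul h)]

/-- With `s = |q₁|² + |q₂|²`, the discriminant locus of the Fermat cubic is invariant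
under the inversive conformal transformations `(q₁,q₂) ↦ (conj(q₁)/s, q₂/s)` and
`(q₁,q₂) ↦ (q₁/s, conj(q₂)/s)` of `ℝ⁴ ∪ {∞}`. -/
theorem fermat_discriminant_inversion_symmetry (q₁ q₂ : ℂ) (h : (q₁, q₂) ≠ (0, 0)) :
    (FermatDegenerate ((starRingEnd ℂ) q₁ / ((Complex.normSq q₁ + Complex.normSq q₂ : ℝ) : ℂ))
        (q₂ / ((Complex.normSq q₁ + Complex.normSq q₂ : ℝ) : ℂ)) ↔
      FermatDegenerate q₁ q₂) ∧
    (FermatDegenerate (q₁ / ((Complex.normSq q₁ + Complex.normSq q₂ : ℝ) : ℂ))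
        ((starRingEnd ℂ) q₂ / ((Complex.normSq q₁ + Complex.normSq q₂ : ℝ) : ℂ)) ↔
      FermatDegenerate q₁ q₂) := by
  have hinv := (fermatDegenerate_neg_right_iff _ _).symm.trans
    (fermatDegenerate_quaternion_inv_iff h)
  refine ⟨hinv, ?_⟩
  rw [← hinv, ← fermatDegenerate_conj_iff, map_div₀, map_div₀, conj_conj, conj_ofReal]
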